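/- Let 0 < ℓ ≤ r. Then w_r(x) ≤ w_ℓ(x) ≤ (r/ℓ) w_r(x) for every x ∈ S. -/

import Mathlib

open scoped RealInnerProductSpace

/-- The regularized and partially linearized merit function
`w_ℓ(x) = max_{y ∈ S} min_i (⟨∇f_i(x), x - y⟩ + g_i(x) - g_i(y) - (ℓ/2)‖x - y‖²)`. -/
noncomputable def meritW {n m : ℕ} (ℓ : ℝ) (S : Set (EuclideanSpace ℝ (Fin n)))
    (Gf : Fin m → EuclideanSpace ℝ (Fin n) → EuclideanSpace ℝ (Fin n))
    (g : Fin m → EuclideanSpace ℝ (Fin n) → ℝ)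
    (x : EuclideanSpace ℝ (Fin n)) : ℝ :=
  sSup ((fun y => ⨅ i, (⟪Gf i x, x - y⟫ + g i x - g i y - ℓ / 2 * ‖x - y‖ ^ 2)) '' S)

lemma aux_lin {n : ℕ} (g : EuclideanSpace ℝ (Fin n) → ℝ) (hg : ConvexOn ℝ Set.univ g)
    (x : EuclideanSpace ℝ (Fin n)) : ∃ C : ℝ, 0 ≤ C ∧ ∀ y, g x - g y ≤ C * (1 + ‖x - y‖) := by
  have hc : ContinuousOn g (Metric.closedBall x 1) :=
    (hg.continuousOn isOpen_univ).mono (Set.subset_univ _)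
  obtain ⟨M, hM⟩ := (isCompact_closedBall x 1).exists_bound_of_continuousOn hc
  have hx := abs_le.1 (hM x (by simp))
  have hM0 : 0 ≤ M := (norm_nonneg _).trans (hM x (by simp))
  refine ⟨2 * M, by linarith, fun y => ?_⟩
  have hd : 0 ≤ ‖x - y‖ := norm_nonneg _
  by_cases h : ‖x - y‖ ≤ 1
  · have hy := abs_le.1 (hM y (by rw [mem_closedBall_iff_norm, norm_sub_rev]; exact h))
    nlinarith
  · push Not at h
    set d := ‖x - y‖ with hdd
    have hd0 : 0 < d := by linarith
    have ht1 : d⁻¹ ≤ 1 := inv_le_one_of_one_le₀ h.le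
    have ht0 : 0 < d⁻¹ := inv_pos.2 hd0
    have hz := hM ((1 - d⁻¹) • x + d⁻¹ • y) (by
      rw [mem_closedBall_iff_norm,
        show (1 - d⁻¹) • x + d⁻¹ • y - x = (-d⁻¹) • (x - y) by module, norm_smul, norm_neg,
        Real.norm_of_nonneg ht0.le, ← hdd, inv_mul_cancel₀ hd0.ne'])
    have hz := abs_le.1 hz
    have hcv := hg.2 (Set.mem_univ x) (Set.mem_univ y) (sub_nonneg.2 ht1) ht0.le (by ring)
    simp only [smul_eq_mul] at hcv
    have h1 : d⁻¹ * (g x - g y) ≤ 2 * M := by linarith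
    have h2 : d * (d⁻¹ * (g x - g y)) ≤ d * (2 * M) := mul_le_mul_of_nonneg_left h1 hd
    rw [← mul_assoc, mul_inv_cancel₀ hd0.ne', one_mul] at h2
    nlinarith

lemma aux_bdd {n m : ℕ} (hm : 0 < m) (ℓ : ℝ) (hℓ : 0 < ℓ) (S : Set (EuclideanSpace ℝ (Fin n)))
    (Gf : Fin m → EuclideanSpace ℝ (Fin n) → EuclideanSpace ℝ (Fin n))
    (g : Fin m → EuclideanSpace ℝ (Fin n) → ℝ)
    (hgconv : ∀ i, ConvexOn ℝ Set.univ (g i))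
    (x : EuclideanSpace ℝ (Fin n)) :
    BddAbove ((fun y => ⨅ i, (⟪Gf i x, x - y⟫ + g i x - g i y - ℓ / 2 * ‖x - y‖ ^ 2)) '' S) := by
  obtain ⟨C, hC, hb⟩ := aux_lin (g ⟨0, hm⟩) (hgconv _) x
  refine ⟨C + (‖Gf ⟨0, hm⟩ x‖ + C) ^ 2 / (2 * ℓ), ?_⟩
  rintro _ ⟨y, -, rfl⟩
  refine (ciInf_le (Set.finite_range _).bddBelow (⟨0, hm⟩ : Fin m)).trans ?_
  have h1 := real_inner_le_norm (Gf ⟨0, hm⟩ x) (x - y)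
  have h2 := hb y
  set A := ‖Gf ⟨0, hm⟩ x‖
  set d := ‖x - y‖
  have h3 : (A + C) * d - ℓ / 2 * d ^ 2 ≤ (A + C) ^ 2 / (2 * ℓ) := by
    rw [le_div_iff₀ (by positivity)]
    nlinarith [sq_nonneg (A + C - ℓ * d)]
  linarith

/-- for `0 < ℓ ≤ r`, `w_r(x) ≤ w_ℓ(x) ≤ (r/ℓ) w_r(x)` for every `x ∈ S`. -/
theorem meritW_parameter_comparison {n m : ℕ} (hm : 0 < m)
    (S : Set (EuclideanSpace ℝ (Fin n))) (hS : S.Nonempty)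
    (hSclosed : IsClosed S) (hSconv : Convex ℝ S)
    (f g : Fin m → EuclideanSpace ℝ (Fin n) → ℝ)
    (Gf : Fin m → EuclideanSpace ℝ (Fin n) → EuclideanSpace ℝ (Fin n))
    (hGf : ∀ i y, HasGradientAt (f i) (Gf i y) y)
    (hgconv : ∀ i, ConvexOn ℝ Set.univ (g i))
    (ℓ r : ℝ) (hℓ : 0 < ℓ) (hℓr : ℓ ≤ r) :
    ∀ x ∈ S, meritW r S Gf g x ≤ meritW ℓ S Gf g x ∧
      meritW ℓ S Gf g x ≤ r / ℓ * meritW r S Gf g x := by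
  intro x hx
  have : Nonempty (Fin m) := ⟨⟨0, hm⟩⟩
  have hr : 0 < r := hℓ.trans_le hℓr
  refine ⟨?_, ?_⟩
  · refine csSup_le (hS.image _) ?_
    rintro _ ⟨y, hy, rfl⟩
    refine le_trans ?_ (le_csSup (aux_bdd hm ℓ hℓ S Gf g hgconv x) ⟨y, hy, rfl⟩)
    refine ciInf_mono (Set.finite_range _).bddBelow fun i => ?_
    have : ℓ / 2 * ‖x - y‖ ^ 2 ≤ r / 2 * ‖x - y‖ ^ 2 := by gcongr
    linarith
  · refine csSup_le (hS.image _) ?_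
    rintro _ ⟨y, hy, rfl⟩
    have ht0 : 0 < ℓ / r := div_pos hℓ hr
    have ht1 : ℓ / r ≤ 1 := (div_le_one hr).2 hℓr
    have hrl : r * (ℓ / r) = ℓ := mul_div_cancel₀ ℓ hr.ne'
    rw [← inv_div ℓ r, ← div_eq_inv_mul, le_div_iff₀' ht0]
    set t := ℓ / r
    have hz : (1 - t) • x + t • y ∈ S := hSconv hx hy (sub_nonneg.2 ht1) ht0.le (by ring)
    refine le_trans ?_ (le_csSup (aux_bdd hm r hr S Gf g hgconv x) ⟨_, hz, rfl⟩)
    refine le_ciInf fun i => ?_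
    refine (mul_le_mul_of_nonneg_left
      (ciInf_le (Set.finite_range _).bddBelow i) ht0.le).trans ?_
    have hcv := (hgconv i).2 (Set.mem_univ x) (Set.mem_univ y) (sub_nonneg.2 ht1) ht0.le (by ring)
    simp only [smul_eq_mul] at hcv
    rw [show x - ((1 - t) • x + t • y) = t • (x - y) by module, inner_smul_right, norm_smul,
      Real.norm_of_nonneg ht0.le]
    have : r / 2 * (t * ‖x - y‖) ^ 2 = t * (ℓ / 2 * ‖x - y‖ ^ 2) := by
      rw [← hrl]; ring
    rw [this]
    linarith
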